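/- arXiv:1309.3190 — 2 statements merged into one kernel-verified Lean document; each statement's English description precedes it below -/
import Mathlib

section
/- Let Γ be a finite group acting on a finite set X, and let M be the abelian group of functions X → ℂ^× under pointwise multiplication, with Γ-action (σ·t)(x) = t(σ^{-1}·x). Then for every abelian group S equipped with a Γ-action by automorphisms and every surjective Γ-equivariant group homomorphism p : S → M, the induced map on Γ-invariants S^Γ → M^Γ is surjective. -/
/-- For a finite group `Γ` acting on a finite set `X` and `M = (X → ℂˣ)` with action
`(σ·t)(x) = t(σ⁻¹·x)`: any surjective `Γ`-equivariant homomorphism `P : S → M` from an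
abelian group `S` with `Γ`-action induces a surjection on `Γ`-invariants `S^Γ → M^Γ`. -/
theorem invariants_map_surjective
    {Γ X S : Type*} [Group Γ] [Fintype Γ] [Fintype X] [MulAction Γ X]
    [CommGroup S] [MulDistribMulAction Γ S]
    (P : S →* (X → ℂˣ)) (hP_surj : Function.Surjective P)
    (hP_equiv : ∀ σ : Γ, ∀ s : S, ∀ x : X, P (σ • s) x = P s (σ⁻¹ • x))
    (m : X → ℂˣ) (hm_inv : ∀ σ : Γ, ∀ x : X, m (σ⁻¹ • x) = m x) :
    ∃ s : S, (∀ σ : Γ, σ • s = s) ∧ P s = m := by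
  have hroot : ∀ z : ℂˣ, ∃ w : ℂˣ, w ^ Fintype.card Γ = z := by
    intro z
    have hn : Fintype.card Γ ≠ 0 := Fintype.card_ne_zero
    obtain ⟨w, hw⟩ := IsAlgClosed.exists_pow_nat_eq (z : ℂ) (Nat.pos_of_ne_zero hn)
    have hw0 : w ≠ 0 := by
      rintro rfl
      rw [zero_pow hn] at hw
      exact z.ne_zero hw.symm
    refine ⟨Units.mk0 w hw0, ?_⟩
    ext
    simpa using hw
  choose r hr using hroot
  obtain ⟨s₀, hs₀⟩ := hP_surj (fun x => r (m x))
  refine ⟨∏ τ : Γ, τ • s₀, ?_, ?_⟩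
  · intro σ
    rw [Finset.smul_prod']
    simp only [smul_smul]
    exact Fintype.prod_equiv (Equiv.mulLeft σ) _ _ (fun _ => rfl)
  · funext x
    rw [map_prod, Finset.prod_apply]
    simp only [hP_equiv, hs₀, hm_inv]
    simp [hr]
end

section
/- Let Γ be a finite group acting on a finite set X, and let M be the abelian group of functions X → ℂ^× under pointwise multiplication, with Γ-action (σ·t)(x) = t(σ^{-1}·x). Let 1 → A →^ι B →^p M → 1 be a short exact sequence of abelian groups with Γ-action and Γ-equivariant homomorphisms. Then the natural map H¹(Γ, A) → H¹(Γ, B) is injective. Concretely: if a : Γ → A satisfies the 1-cocycle relation a(στ) = a(σ)·(σ·a(τ)) for all σ, τ ∈ Γ, and there exists b ∈ B with ι(a(σ)) = (σ·b)·b^{-1} for all σ ∈ Γ, then there exists a₀ ∈ A with a(σ) = (σ·a₀)·a₀^{-1} for all σ ∈ Γ. -/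
/-- Let `1 → A → B → M → 1` be a short exact sequence of abelian groups with `Γ`-action,
where `M = (X → ℂˣ)` with the permutation action `(σ·t)(x) = t(σ⁻¹·x)` for a finite group
`Γ` acting on a finite set `X`. Then `H¹(Γ,A) → H¹(Γ,B)` is injective: any 1-cocycle of
`Γ` in `A` which becomes a coboundary in `B` is already a coboundary in `A`. -/
theorem h1_map_injective_of_permutation_quotient
    {Γ X A B : Type*} [Group Γ] [Fintype Γ] [Fintype X] [MulAction Γ X]
    [CommGroup A] [MulDistribMulAction Γ A]
    [CommGroup B] [MulDistribMulAction Γ B]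
    (ι : A →* B) (hι_inj : Function.Injective ι)
    (hι_equiv : ∀ σ : Γ, ∀ a : A, ι (σ • a) = σ • ι a)
    (P : B →* (X → ℂˣ)) (hP_surj : Function.Surjective P)
    (hP_equiv : ∀ σ : Γ, ∀ b : B, ∀ x : X, P (σ • b) x = P b (σ⁻¹ • x))
    (hexact : ∀ b : B, P b = 1 ↔ ∃ a : A, ι a = b)
    (a : Γ → A) (hcoc : ∀ σ τ : Γ, a (σ * τ) = a σ * σ • a τ)
    (b : B) (hb : ∀ σ : Γ, ι (a σ) = (σ • b) * b⁻¹) :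
    ∃ a₀ : A, ∀ σ : Γ, a σ = (σ • a₀) * a₀⁻¹ := by
  have hn : Fintype.card Γ ≠ 0 := Fintype.card_ne_zero
  have hroot : ∀ z : ℂˣ, ∃ w : ℂˣ, w ^ Fintype.card Γ = z := by
    intro z
    obtain ⟨w, hw⟩ := IsAlgClosed.exists_pow_nat_eq (z : ℂ) (Nat.pos_of_ne_zero hn)
    have hw0 : w ≠ 0 := by
      rintro rfl
      rw [zero_pow hn] at hw
      exact z.ne_zero hw.symm
    exact ⟨Units.mk0 w hw0, Units.ext (by simpa using hw)⟩
  choose r hr using hroot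
  -- `P b` is invariant
  have hinv : ∀ (σ : Γ) (x : X), P b (σ⁻¹ • x) = P b x := by
    intro σ x
    have h1 : P ((σ • b) * b⁻¹) = 1 := (hexact _).2 ⟨a σ, hb σ⟩
    have h2 := congrFun h1 x
    rw [map_mul, map_inv, Pi.mul_apply, Pi.inv_apply, hP_equiv, Pi.one_apply,
      mul_inv_eq_one] at h2
    exact h2
  obtain ⟨c, hc⟩ := hP_surj (fun x => r (P b x))
  -- the norm of `c`
  have hNinv : ∀ τ : Γ, τ • (∏ σ : Γ, σ • c) = ∏ σ : Γ, σ • c := by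
    intro τ
    rw [Finset.smul_prod']
    simp only [smul_smul]
    exact Fintype.prod_equiv (Equiv.mulLeft τ) _ _ (fun _ => rfl)
  have hPN : P (∏ σ : Γ, σ • c) = P b := by
    funext x
    rw [map_prod, Finset.prod_apply]
    simp only [hP_equiv, hc, hinv]
    rw [Finset.prod_const, Finset.card_univ, hr]
  obtain ⟨a₀, ha₀⟩ := (hexact (b * (∏ σ : Γ, σ • c)⁻¹)).1 (by
    rw [map_mul, map_inv, hPN, mul_inv_cancel])
  refine ⟨a₀, fun σ => hι_inj ?_⟩
  rw [hb, map_mul, map_inv, hι_equiv, ha₀, smul_mul', smul_inv', hNinv, mul_inv, inv_inv,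
    mul_mul_mul_comm, inv_mul_cancel, mul_one]
end
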